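/- arXiv:math/9509223 — 2 statements merged into one kernel-verified Lean document; each statement's English description precedes it below -/
import Mathlib

section
/- (q-binomial theorem for base |q| > 1) Let q, a, z be complex numbers with |q| > 1 and |az/q| < 1. Then ∑_{n=0}^∞ ((a;q)_n/(q;q)_n) z^n = (z/q; q^{-1})_∞ / (az/q; q^{-1})_∞. -/
/-- The finite q-shifted factorial `(a;q)_n = ∏_{k=0}^{n-1} (1 - a q^k)`. -/
noncomputable def qPoch (a q : ℂ) (n : ℕ) : ℂ := ∏ k ∈ Finset.range n, (1 - a * q ^ k)

/-- The infinite q-shifted factorial `(a;q)_∞ = ∏_{k=0}^∞ (1 - a q^k)`. -/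
noncomputable def qPochInf (a q : ℂ) : ℂ := ∏' k : ℕ, (1 - a * q ^ k)

/-!
Dividing the factors of `(a;q)_n / (q;q)_n zⁿ` by powers of `q` and writing `p = q⁻¹`, `x = az/q`,
`y = z/q` turns the series into `S(x, y) = ∑ₙ ∏_{k<n} (x - y pᵏ) / (1 - pᵏ⁺¹)`, which converges for
`|p| < 1`, `|x| < 1` and is homogeneous: its `n`-th term is multiplied by `tⁿ` when `(x, y)` is
multiplied by `t`. The recursion of the terms gives `(1 - x) S(x, y) = (1 - y) S(xp, yp)`.
Iterating, `(x;p)_N S(x, y) = (y;p)_N S(x pᴺ, y pᴺ)`, and `S(x pᴺ, y pᴺ) → 1` as `N → ∞`.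
-/

open Filter Finset Topology

section Field

variable {𝕜 : Type*} [Field 𝕜]

/-- The `n`-th term `∏_{k<n} (x - y pᵏ) / (1 - pᵏ⁺¹)` of the homogeneous `q`-binomial series in
base `p`. For `x = z`, `y = az` it is the usual `(a;p)_n / (p;p)_n zⁿ`; the homogeneous form also
covers the limiting case `x = 0`. -/
def qBinomialTerm (p x y : 𝕜) (n : ℕ) : 𝕜 :=
  ∏ k ∈ range n, (x - y * p ^ k) / (1 - p ^ (k + 1))

theorem qBinomialTerm_zero (p x y : 𝕜) : qBinomialTerm p x y 0 = 1 :=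
  prod_range_zero _

theorem qBinomialTerm_succ (p x y : 𝕜) (n : ℕ) :
    qBinomialTerm p x y (n + 1) =
      qBinomialTerm p x y n * ((x - y * p ^ n) / (1 - p ^ (n + 1))) :=
  prod_range_succ _ _

theorem qBinomialTerm_mul_mul (p x y t : 𝕜) (n : ℕ) :
    qBinomialTerm p (x * t) (y * t) n = qBinomialTerm p x y n * t ^ n := by
  induction n with
  | zero => simp only [qBinomialTerm_zero, pow_zero, mul_one]
  | succ n ih =>
    rw [qBinomialTerm_succ, qBinomialTerm_succ, ih]
    ring

end Field

section NormedField

variable {𝕜 : Type*} [NormedField 𝕜] {p x : 𝕜}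

theorem one_sub_pow_succ_ne_zero (hp : ‖p‖ < 1) (n : ℕ) : 1 - p ^ (n + 1) ≠ 0 := by
  refine sub_ne_zero.mpr fun h => ?_
  have : ‖p‖ ^ (n + 1) = 1 := by rw [← norm_pow, ← h, norm_one]
  exact (pow_lt_one₀ (norm_nonneg p) hp n.succ_ne_zero).ne this

theorem norm_mul_pow_lt_one (hp : ‖p‖ < 1) (hx : ‖x‖ < 1) (n : ℕ) : ‖x * p ^ n‖ < 1 := by
  rw [norm_mul, norm_pow]
  exact mul_lt_one_of_nonneg_of_lt_one_left (norm_nonneg x) hx (pow_le_one₀ (norm_nonneg p) hp.le)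

theorem summable_norm_neg_mul_pow (hp : ‖p‖ < 1) (x : 𝕜) :
    Summable fun k : ℕ => ‖-(x * p ^ k)‖ := by
  simp only [norm_neg, norm_mul, norm_pow]
  exact (summable_geometric_of_lt_one (norm_nonneg p) hp).mul_left ‖x‖

theorem summable_norm_qBinomialTerm (hp : ‖p‖ < 1) (hx : ‖x‖ < 1) (y : 𝕜) :
    Summable fun n => ‖qBinomialTerm p x y n‖ := by
  obtain ⟨r, hxr, hr⟩ := exists_between hx
  have hpow : Tendsto (fun n : ℕ => p ^ n) atTop (𝓝 0) :=
    tendsto_pow_atTop_nhds_zero_of_norm_lt_one hp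
  have hratio : Tendsto (fun n : ℕ => ‖(x - y * p ^ n) / (1 - p ^ (n + 1))‖) atTop (𝓝 ‖x‖) := by
    have hnum : Tendsto (fun n : ℕ => x - y * p ^ n) atTop (𝓝 x) := by
      simpa only [mul_zero, sub_zero] using (hpow.const_mul y).const_sub x
    have hden : Tendsto (fun n : ℕ => 1 - p ^ (n + 1)) atTop (𝓝 1) := by
      simpa only [sub_zero] using ((tendsto_add_atTop_iff_nat 1).mpr hpow).const_sub 1
    simpa only [Pi.div_apply, div_one] using (hnum.div hden one_ne_zero).norm
  refine summable_of_ratio_norm_eventually_le hr ?_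
  filter_upwards [hratio.eventually_le_const hxr] with n hn
  rw [norm_norm, norm_norm, qBinomialTerm_succ, norm_mul, mul_comm]
  gcongr

variable [CompleteSpace 𝕜]

theorem tendsto_tsum_mul_pow_nhds_zero {c : ℕ → 𝕜} (hc : Summable fun n => ‖c n‖) :
    Tendsto (fun t : 𝕜 => ∑' n, c n * t ^ n) (𝓝 0) (𝓝 (c 0)) := by
  have hzero : ∑' n, c n * (0 : 𝕜) ^ n = c 0 := by
    rw [tsum_eq_single 0 fun n hn => by rw [zero_pow hn, mul_zero], pow_zero, mul_one]
  rw [← hzero]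
  refine tendsto_tsum_of_dominated_convergence hc
    (fun n => ((continuous_pow n).tendsto 0).const_mul (c n)) ?_
  filter_upwards [Metric.closedBall_mem_nhds (0 : 𝕜) one_pos] with t ht n
  rw [norm_mul, norm_pow]
  exact mul_le_of_le_one_right (norm_nonneg _)
    (pow_le_one₀ (norm_nonneg t) (mem_closedBall_zero_iff.mp ht))

theorem one_sub_mul_tsum_qBinomialTerm (hp : ‖p‖ < 1) (hx : ‖x‖ < 1) (y : 𝕜) :
    (1 - x) * ∑' n, qBinomialTerm p x y n =
      (1 - y) * ∑' n, qBinomialTerm p (x * p) (y * p) n := by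
  simp only [qBinomialTerm_mul_mul]
  set c := qBinomialTerm p x y
  have hc : Summable c := (summable_norm_qBinomialTerm hp hx y).of_norm
  have hcp : Summable fun n => c n * p ^ n := by
    have hxp : ‖x * p‖ < 1 := by simpa only [pow_one] using norm_mul_pow_lt_one hp hx 1
    exact (summable_norm_qBinomialTerm hp hxp (y * p)).of_norm.congr
      fun n => qBinomialTerm_mul_mul p x y p n
  have hrec (n : ℕ) : c (n + 1) - c (n + 1) * p ^ (n + 1) = x * c n - y * (c n * p ^ n) := by
    have hden := one_sub_pow_succ_ne_zero hp n
    simp only [c, qBinomialTerm_succ]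
    field_simp
  have hdiff : ∑' n, c n - ∑' n, c n * p ^ n = x * ∑' n, c n - y * ∑' n, c n * p ^ n := by
    calc
      ∑' n, c n - ∑' n, c n * p ^ n = ∑' n, (c n - c n * p ^ n) := (hc.tsum_sub hcp).symm
      _ = ∑' n, (c (n + 1) - c (n + 1) * p ^ (n + 1)) := by
        rw [(hc.sub hcp).tsum_eq_zero_add, pow_zero, mul_one, sub_self, zero_add]
      _ = ∑' n, (x * c n - y * (c n * p ^ n)) := tsum_congr hrec
      _ = x * ∑' n, c n - y * ∑' n, c n * p ^ n := by
        rw [(hc.mul_left x).tsum_sub (hcp.mul_left y), tsum_mul_left, tsum_mul_left]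
  linear_combination hdiff

theorem tendsto_tsum_qBinomialTerm_mul_pow (hp : ‖p‖ < 1) (hx : ‖x‖ < 1) (y : 𝕜) :
    Tendsto (fun N : ℕ => ∑' n, qBinomialTerm p (x * p ^ N) (y * p ^ N) n) atTop (𝓝 1) := by
  simp only [qBinomialTerm_mul_mul]
  rw [← qBinomialTerm_zero p x y]
  exact (tendsto_tsum_mul_pow_nhds_zero (summable_norm_qBinomialTerm hp hx y)).comp
    (tendsto_pow_atTop_nhds_zero_of_norm_lt_one hp)

end NormedField

section Complex

variable {p x : ℂ}

theorem qPoch_succ (a q : ℂ) (n : ℕ) : qPoch a q (n + 1) = qPoch a q n * (1 - a * q ^ n) :=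
  prod_range_succ _ _

theorem qPoch_div_qPoch_mul_pow {q : ℂ} (hq : q ≠ 0) (a z : ℂ) (n : ℕ) :
    qPoch a q n / qPoch q q n * z ^ n = qBinomialTerm q⁻¹ (a * z / q) (z / q) n := by
  induction n with
  | zero => simp [qPoch, qBinomialTerm_zero]
  | succ n ih =>
    have hfactor : (1 - a * q ^ n) / (1 - q * q ^ n) * z =
        (a * z / q - z / q * q⁻¹ ^ n) / (1 - q⁻¹ ^ (n + 1)) := by
      have hscale : -q ^ (n + 1) ≠ 0 := neg_ne_zero.mpr (pow_ne_zero _ hq)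
      rw [← mul_div_mul_left _ (1 - q⁻¹ ^ (n + 1)) hscale, div_mul_eq_mul_div, inv_pow, inv_pow]
      congr 1 <;> field_simp <;> ring
    rw [qBinomialTerm_succ, ← ih, ← hfactor, qPoch_succ, qPoch_succ, pow_succ, mul_div_mul_comm]
    ring

theorem tendsto_qPoch (hp : ‖p‖ < 1) (x : ℂ) :
    Tendsto (fun n => qPoch x p n) atTop (𝓝 (qPochInf x p)) := by
  have hmul := multipliable_one_add_of_summable (summable_norm_neg_mul_pow hp x)
  simpa only [qPoch, qPochInf, sub_eq_add_neg] using hmul.tendsto_prod_tprod_nat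

theorem qPochInf_ne_zero (hp : ‖p‖ < 1) (hx : ∀ k : ℕ, x * p ^ k ≠ 1) : qPochInf x p ≠ 0 := by
  have hfactor (k : ℕ) : 1 + -(x * p ^ k) ≠ 0 := by
    rw [← sub_eq_add_neg]
    exact sub_ne_zero.mpr (hx k).symm
  simpa only [qPochInf, sub_eq_add_neg] using
    tprod_one_add_ne_zero_of_summable hfactor (summable_norm_neg_mul_pow hp x)

theorem qPoch_mul_tsum_qBinomialTerm (hp : ‖p‖ < 1) (hx : ‖x‖ < 1) (y : ℂ) (N : ℕ) :
    qPoch x p N * ∑' n, qBinomialTerm p x y n =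
      qPoch y p N * ∑' n, qBinomialTerm p (x * p ^ N) (y * p ^ N) n := by
  induction N with
  | zero => simp only [qPoch, prod_range_zero, pow_zero, mul_one]
  | succ N ih =>
    have hstep := one_sub_mul_tsum_qBinomialTerm hp (norm_mul_pow_lt_one hp hx N) (y * p ^ N)
    simp only [mul_assoc, ← pow_succ] at hstep
    rw [qPoch_succ, qPoch_succ]
    linear_combination (1 - x * p ^ N) * ih + qPoch y p N * hstep

theorem hasSum_qBinomialTerm (hp : ‖p‖ < 1) (hx : ‖x‖ < 1) (y : ℂ) :
    HasSum (qBinomialTerm p x y) (qPochInf y p / qPochInf x p) := by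
  have hne : qPochInf x p ≠ 0 := qPochInf_ne_zero hp fun k hk => by
    simpa only [hk, norm_one, lt_irrefl] using norm_mul_pow_lt_one hp hx k
  have hlim : Tendsto (fun N => qPoch x p N * ∑' n, qBinomialTerm p x y n) atTop
      (𝓝 (qPochInf y p)) := by
    simpa only [qPoch_mul_tsum_qBinomialTerm hp hx y, mul_one] using
      (tendsto_qPoch hp y).mul (tendsto_tsum_qBinomialTerm_mul_pow hp hx y)
  have hprod : qPochInf x p * ∑' n, qBinomialTerm p x y n = qPochInf y p :=
    tendsto_nhds_unique ((tendsto_qPoch hp x).mul_const _) hlim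
  rw [← hprod, mul_div_cancel_left₀ _ hne]
  exact (summable_norm_qBinomialTerm hp hx y).of_norm.hasSum

end Complex

/-- The q-binomial theorem for base `|q| > 1`: if `|az/q| < 1`, then
`∑_{n=0}^∞ ((a;q)_n/(q;q)_n) z^n = (z/q; q⁻¹)_∞ / (az/q; q⁻¹)_∞`. -/
theorem q_binomial_theorem_base_gt_one (q a z : ℂ) (hq : 1 < ‖q‖) (h : ‖a * z / q‖ < 1) :
    HasSum (fun n : ℕ => qPoch a q n / qPoch q q n * z ^ n)
      (qPochInf (z / q) q⁻¹ / qPochInf (a * z / q) q⁻¹) := by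
  have hq₀ : q ≠ 0 := norm_pos_iff.mp (one_pos.trans hq)
  have hp : ‖q⁻¹‖ < 1 := by
    rw [norm_inv]
    exact inv_lt_one_of_one_lt₀ hq
  simpa only [qPoch_div_qPoch_mul_pow hq₀] using hasSum_qBinomialTerm hp h (z / q)
end

section
/- (Limit of the q-gamma function) For every complex number z that is not a nonpositive integer, lim_{q→1⁻} Γ_q(z) = Γ(z), where the limit is taken over real q increasing to 1 and Γ is the classical gamma function. -/
/-- The q-gamma function for real `0 < q < 1` and complex `z`:
`Γ_q(z) = ((q;q)_∞/(q^z;q)_∞)(1-q)^{1-z}`, with `q^z = exp(z log q)` and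
`(1-q)^{1-z} = exp((1-z) log(1-q))` using the real logarithms. -/
noncomputable def qGamma (q : ℝ) (z : ℂ) : ℂ :=
  qPochInf (q : ℂ) (q : ℂ) / qPochInf (Complex.exp (z * (Real.log q : ℂ))) (q : ℂ) *
    Complex.exp ((1 - z) * (Real.log (1 - q) : ℂ))

/-! Euler's product is `1/Γ(z) = z ∏_{k ≥ 1} (1 + z/k)(1 + 1/k)^{-z}`. With `s = [z]_q` and
`r_k = q^k/[k]_q`, one has `1 + s r_k = (1 - q^{z+k})/(1 - q^k)` and `1 + r_k = [k+1]_q/[k]_q`, so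
the same product gives the q-gamma function:
`1/Γ_q(z) = (1 - q)^{z - s} s ∏_{k ≥ 1} (1 + s r_k)(1 + r_k)^{-s}`.
As `q → 1⁻` we have `s → z` and `r_k → 1/k`. Since `0 ≤ r_k ≤ 1/k`, the `k`-th factor is
`1 + O(k⁻²)` uniformly in `q`, so dominated convergence applies to the product. Finally
`(1 - q)^{z - s} → 1`, because `z - s = O(1 - q)` and `x log x → 0` as `x → 0`. -/

open Filter Topology Asymptotics Finset

section EulerFactor

/-- The factor `(1 + s r)(1 + r)^{-s}`; at `r = 1/k` it is the `k`-th factor of Euler's product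
for `1/Γ(s)`. -/
noncomputable def eulerFactor (s : ℂ) (r : ℝ) : ℂ :=
  (1 + s * r) * ((1 + r : ℝ) : ℂ) ^ (-s)

lemma eulerFactor_eq_exp (s : ℂ) {r : ℝ} (hr : 0 ≤ r) :
    eulerFactor s r = (1 + s * r) * Complex.exp (-(s * Real.log (1 + r))) := by
  have h : 0 < 1 + r := by positivity
  rw [eulerFactor, Complex.cpow_def_of_ne_zero (mod_cast h.ne'), ← Complex.ofReal_log h.le,
    mul_neg, mul_comm (Complex.ofReal _)]

lemma tendsto_eulerFactor {ι : Type*} {l : Filter ι} {s : ι → ℂ} {s₀ : ℂ} {r : ι → ℝ} {r₀ : ℝ}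
    (hs : Tendsto s l (𝓝 s₀)) (hr : Tendsto r l (𝓝 r₀)) (hr₀ : 0 ≤ r₀) :
    Tendsto (fun i => eulerFactor (s i) (r i)) l (𝓝 (eulerFactor s₀ r₀)) := by
  have hbase : ((1 + r₀ : ℝ) : ℂ) ∈ Complex.slitPlane :=
    Complex.ofReal_mem_slitPlane.2 (by positivity)
  exact ((hs.mul hr.ofReal).const_add 1).mul ((hr.const_add 1).ofReal.cpow hs.neg hbase)

lemma prod_range_eulerFactor (s : ℂ) {r : ℕ → ℝ} (hr : ∀ k, 0 ≤ r k) (n : ℕ) :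
    ∏ k ∈ range n, eulerFactor s (r k) =
      (∏ k ∈ range n, (1 + s * r k)) * ((∏ k ∈ range n, (1 + r k) : ℝ) : ℂ) ^ (-s) := by
  induction n with
  | zero => simp
  | succ n ih =>
    have hprod : 0 ≤ ∏ k ∈ range n, (1 + r k) := prod_nonneg fun k _ => by linarith [hr k]
    rw [prod_range_succ, ih, prod_range_succ, prod_range_succ, eulerFactor, Complex.ofReal_mul,
      Complex.mul_cpow_ofReal_nonneg hprod (by linarith [hr n])]
    ring

lemma norm_exp_sub_one_sub_self_le (w : ℂ) :
    ‖Complex.exp w - 1 - w‖ ≤ ‖w‖ ^ 2 * Real.exp ‖w‖ := by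
  simpa [sum_range_succ, sub_sub] using Complex.norm_exp_sub_sum_le_norm_mul_exp w 2

lemma abs_sub_log_one_add_le_sq {r : ℝ} (hr : 0 ≤ r) : |r - Real.log (1 + r)| ≤ r ^ 2 := by
  have hpos : 0 < 1 + r := by positivity
  have hupper : Real.log (1 + r) ≤ r := by linarith [Real.log_le_sub_one_of_pos hpos]
  have hlower : r - r ^ 2 ≤ Real.log (1 + r) := calc
    r - r ^ 2 ≤ 1 - (1 + r)⁻¹ := by
      rw [← sub_nonneg]
      have : 1 - (1 + r)⁻¹ - (r - r ^ 2) = r ^ 3 / (1 + r) := by field_simp; ring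
      rw [this]
      positivity
    _ ≤ Real.log (1 + r) := Real.one_sub_inv_le_log_of_pos hpos
  rw [abs_le]
  constructor <;> linarith [sq_nonneg r]

lemma norm_eulerFactor_sub_one_le {s : ℂ} {r R : ℝ} (hs : ‖s‖ ≤ R) (hr₀ : 0 ≤ r) (hr₁ : r ≤ 1) :
    ‖eulerFactor s r - 1‖ ≤ Real.exp R * (R + R ^ 2 * Real.exp R) * r ^ 2 := by
  set w : ℂ := s * Real.log (1 + r) with hw
  have hR : 0 ≤ R := (norm_nonneg s).trans hs
  have hlog : |Real.log (1 + r)| ≤ r := by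
    rw [abs_of_nonneg (Real.log_nonneg (by linarith))]
    linarith [Real.log_le_sub_one_of_pos (by positivity : 0 < 1 + r)]
  have hwr : ‖w‖ ≤ R * r := by
    rw [hw, norm_mul, Complex.norm_real, Real.norm_eq_abs]
    gcongr
  have hwR : ‖w‖ ≤ R := hwr.trans (mul_le_of_le_one_right hR hr₁)
  have hexp : ‖Complex.exp (-w)‖ ≤ Real.exp R :=
    (Complex.norm_exp_le_exp_norm _).trans (by rw [norm_neg]; gcongr)
  have hlinear : ‖s * (r - Real.log (1 + r) : ℝ)‖ ≤ R * r ^ 2 := by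
    rw [norm_mul, Complex.norm_real, Real.norm_eq_abs]
    gcongr
    exact abs_sub_log_one_add_le_sq hr₀
  have hquadratic : ‖Complex.exp w - 1 - w‖ ≤ R ^ 2 * Real.exp R * r ^ 2 := calc
    ‖Complex.exp w - 1 - w‖ ≤ ‖w‖ ^ 2 * Real.exp ‖w‖ := norm_exp_sub_one_sub_self_le w
    _ ≤ (R * r) ^ 2 * Real.exp R := by gcongr
    _ = R ^ 2 * Real.exp R * r ^ 2 := by ring
  have hsplit : eulerFactor s r - 1 = Complex.exp (-w) *
      (s * (r - Real.log (1 + r) : ℝ) - (Complex.exp w - 1 - w)) := by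
    have hcancel : Complex.exp (-w) * Complex.exp w = 1 := by rw [← Complex.exp_add]; simp
    rw [eulerFactor_eq_exp s hr₀, ← hw, Complex.ofReal_sub, mul_sub s, ← hw]
    linear_combination hcancel
  calc ‖eulerFactor s r - 1‖
      ≤ Real.exp R * (R * r ^ 2 + R ^ 2 * Real.exp R * r ^ 2) := by
        rw [hsplit, norm_mul]
        gcongr
        exact (norm_sub_le _ _).trans (add_le_add hlinear hquadratic)
    _ = Real.exp R * (R + R ^ 2 * Real.exp R) * r ^ 2 := by ring

lemma multipliable_eulerFactor (s : ℂ) {r : ℕ → ℝ} (hr₀ : ∀ k, 0 ≤ r k) (hr₁ : ∀ k, r k ≤ 1)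
    (hr : Summable fun k => r k ^ 2) : Multipliable fun k => eulerFactor s (r k) := by
  have h : Summable fun k => ‖eulerFactor s (r k) - 1‖ :=
    .of_nonneg_of_le (fun _ => norm_nonneg _)
      (fun k => norm_eulerFactor_sub_one_le le_rfl (hr₀ k) (hr₁ k)) (hr.mul_left _)
  simpa using multipliable_one_add_of_summable h

lemma tendsto_tprod_eulerFactor {ι : Type*} {l : Filter ι} {s : ι → ℂ} {s₀ : ℂ}
    {r : ι → ℕ → ℝ} {r₀ b : ℕ → ℝ} (hs : Tendsto s l (𝓝 s₀))
    (hr : ∀ k, Tendsto (fun i => r i k) l (𝓝 (r₀ k)))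
    (hrb : ∀ᶠ i in l, ∀ k, 0 ≤ r i k ∧ r i k ≤ b k) (hb₁ : ∀ k, b k ≤ 1)
    (hb : Summable fun k => b k ^ 2) :
    Tendsto (fun i => ∏' k, eulerFactor (s i) (r i k)) l (𝓝 (∏' k, eulerFactor s₀ (r₀ k))) := by
  rcases l.eq_or_neBot with rfl | _
  · exact tendsto_bot
  have hr₀ (k : ℕ) : 0 ≤ r₀ k := ge_of_tendsto (hr k) (hrb.mono fun i hi => (hi k).1)
  set R := ‖s₀‖ + 1
  have hsR : ∀ᶠ i in l, ‖s i‖ ≤ R := hs.norm.eventually_le_const (lt_add_one _)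
  have hbound : ∀ᶠ i in l, ∀ k,
      ‖eulerFactor (s i) (r i k) - 1‖ ≤ Real.exp R * (R + R ^ 2 * Real.exp R) * b k ^ 2 := by
    filter_upwards [hsR, hrb] with i hi hir k
    obtain ⟨hik₀, hikb⟩ := hir k
    calc ‖eulerFactor (s i) (r i k) - 1‖
        ≤ Real.exp R * (R + R ^ 2 * Real.exp R) * r i k ^ 2 :=
          norm_eulerFactor_sub_one_le hi hik₀ (hikb.trans (hb₁ k))
      _ ≤ Real.exp R * (R + R ^ 2 * Real.exp R) * b k ^ 2 := by
          gcongr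
  simpa using tendsto_tprod_one_add_of_dominated_convergence
    (f := fun i k => eulerFactor (s i) (r i k) - 1) (g := fun k => eulerFactor s₀ (r₀ k) - 1)
    (hb.mul_left _) (fun k => (tendsto_eulerFactor hs (hr k) (hr₀ k)).sub_const 1) hbound

end EulerFactor

section EulerProduct

lemma summable_one_div_nat_add_one_sq : Summable fun k : ℕ => (1 / ((k : ℝ) + 1)) ^ 2 := by
  simpa using (summable_nat_add_iff 1).2 (Real.summable_nat_pow_inv.2 one_lt_two)

lemma one_div_nat_add_one_le_one (k : ℕ) : 1 / ((k : ℝ) + 1) ≤ 1 :=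
  div_le_one_of_le₀ (by simp) (by positivity)

lemma prod_range_one_add_one_div (n : ℕ) :
    ∏ k ∈ range n, (1 + 1 / ((k : ℝ) + 1)) = n + 1 := by
  induction n with
  | zero => simp
  | succ n ih =>
    rw [prod_range_succ, ih, mul_one_add, mul_one_div_cancel n.cast_add_one_ne_zero, Nat.cast_succ]

lemma mul_prod_range_eulerFactor_one_div (z : ℂ) {n : ℕ} (hn : n ≠ 0) :
    z * ∏ k ∈ range n, eulerFactor z (1 / (k + 1)) =
      (Complex.GammaSeq z n)⁻¹ * ((n / (n + 1) : ℝ) : ℂ) ^ z := by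
  have hshift : (n.factorial : ℂ) * ∏ k ∈ range n, (1 + z * (1 / (k + 1) : ℝ)) =
      ∏ k ∈ range n, (z + (k + 1 : ℕ)) := by
    rw [← prod_range_add_one_eq_factorial, Nat.cast_prod, ← prod_mul_distrib]
    refine prod_congr rfl fun k _ => ?_
    have : (k : ℂ) + 1 ≠ 0 := Nat.cast_add_one_ne_zero k
    push_cast
    field_simp
    ring
  have hn₀ : (n : ℂ) ^ z ≠ 0 := by simp [Complex.cpow_eq_zero_iff, hn]
  have hfactorial : (n.factorial : ℂ) ≠ 0 := mod_cast n.factorial_ne_zero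
  rw [prod_range_eulerFactor z (fun k => by positivity), prod_range_one_add_one_div,
    Complex.cpow_neg, Complex.ofReal_div,
    Complex.div_cpow_ofReal_nonneg n.cast_nonneg (by positivity),
    Complex.GammaSeq, prod_range_succ', ← hshift, Complex.ofReal_natCast]
  field_simp
  simp [mul_comm]

theorem mul_tprod_eulerFactor_one_div {z : ℂ} (hz : ∀ n : ℕ, z ≠ -n) :
    z * ∏' k : ℕ, eulerFactor z (1 / (k + 1)) = (Complex.Gamma z)⁻¹ := by
  have hprod := (multipliable_eulerFactor z (fun k => by positivity) one_div_nat_add_one_le_one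
    summable_one_div_nat_add_one_sq).tendsto_prod_tprod_nat.const_mul z
  have hseq := (Complex.GammaSeq_tendsto_Gamma z).inv₀ (Complex.Gamma_ne_zero hz)
  have hratio : Tendsto (fun n : ℕ => ((n / (n + 1) : ℝ) : ℂ) ^ z) atTop (𝓝 1) := by
    have h := (Complex.continuousAt_ofReal_cpow_const 1 z (.inr one_ne_zero)).tendsto.comp
      (tendsto_natCast_div_add_atTop (1 : ℝ))
    simpa [Function.comp_def] using h
  have hlim := hseq.mul hratio
  rw [mul_one] at hlim
  refine tendsto_nhds_unique hprod (hlim.congr' ?_)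
  filter_upwards [eventually_ne_atTop 0] with n hn
  exact (mul_prod_range_eulerFactor_one_div z hn).symm

end EulerProduct

section QPochhammer

variable {q : ℂ}

lemma summable_norm_mul_pow (a : ℂ) (hq : ‖q‖ < 1) : Summable fun k : ℕ => ‖-(a * q ^ k)‖ := by
  simpa using (summable_geometric_of_lt_one (norm_nonneg q) hq).mul_left ‖a‖

lemma multipliable_one_sub_mul_pow (a : ℂ) (hq : ‖q‖ < 1) :
    Multipliable fun k : ℕ => 1 - a * q ^ k := by
  simpa [sub_eq_add_neg] using multipliable_one_add_of_summable (summable_norm_mul_pow a hq)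

lemma qPochInf_ne_zero_s8 {a : ℂ} (hq : ‖q‖ < 1) (ha : ∀ k : ℕ, a * q ^ k ≠ 1) :
    qPochInf a q ≠ 0 := by
  simpa [qPochInf, sub_eq_add_neg] using tprod_one_add_ne_zero_of_summable
    (fun k => by rw [← sub_eq_add_neg]; exact sub_ne_zero.2 (ha k).symm)
    (summable_norm_mul_pow a hq)

lemma qPochInf_self_ne_zero (hq : ‖q‖ < 1) : qPochInf q q ≠ 0 := by
  refine qPochInf_ne_zero_s8 hq fun k h => ?_
  have hlt : ‖q ^ (k + 1)‖ < 1 := by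
    rw [norm_pow]
    exact pow_lt_one₀ (norm_nonneg q) hq k.succ_ne_zero
  rw [pow_succ', h, norm_one] at hlt
  exact hlt.false

lemma qPochInf_eq_one_sub_mul (a : ℂ) (hq : ‖q‖ < 1) :
    qPochInf a q = (1 - a) * qPochInf (a * q) q := by
  have h : Multipliable fun k : ℕ => 1 - a * q ^ (k + 1) := by
    simpa only [pow_succ', mul_assoc] using multipliable_one_sub_mul_pow (a * q) hq
  rw [qPochInf, tprod_eq_zero_mul' (f := fun k : ℕ => 1 - a * q ^ k) h, qPochInf]
  simp only [pow_zero, mul_one, pow_succ', mul_assoc]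

end QPochhammer

section QRecip

/-- The q-analogue `q^{k+1}/[k+1]_q` of `1/(k+1)`, chosen so that adding `1` to it gives the
ratio `[k+2]_q/[k+1]_q`. The q-number `[k+1]_q` is written as a geometric sum so that `q = 1` is
allowed. -/
noncomputable def qRecip (q : ℝ) (k : ℕ) : ℝ :=
  q ^ (k + 1) / ∑ i ∈ range (k + 1), q ^ i

variable {q : ℝ}

lemma geom_sum_succ_pos (hq : 0 ≤ q) (n : ℕ) : 0 < ∑ i ∈ range (n + 1), q ^ i :=
  geom_sum_pos hq n.succ_ne_zero

lemma qRecip_nonneg (hq : 0 ≤ q) (k : ℕ) : 0 ≤ qRecip q k :=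
  div_nonneg (by positivity) (geom_sum_succ_pos hq k).le

lemma qRecip_le_one_div (hq₀ : 0 ≤ q) (hq₁ : q ≤ 1) (k : ℕ) : qRecip q k ≤ 1 / (k + 1) := by
  rw [qRecip, div_le_div_iff₀ (geom_sum_succ_pos hq₀ k) (by positivity), one_mul]
  calc q ^ (k + 1) * (k + 1) = ∑ _i ∈ range (k + 1), q ^ (k + 1) := by simp [mul_comm]
    _ ≤ ∑ i ∈ range (k + 1), q ^ i :=
      sum_le_sum fun i hi => pow_le_pow_of_le_one hq₀ hq₁ (mem_range.1 hi).le

lemma tendsto_qRecip_one (k : ℕ) :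
    Tendsto (fun q => qRecip q k) (𝓝 1) (𝓝 (1 / (k + 1))) := by
  have h : ContinuousAt (fun q => qRecip q k) 1 := by
    unfold qRecip
    fun_prop (disch := simpa using k.cast_add_one_ne_zero)
  simpa [qRecip] using h.tendsto

lemma prod_range_one_add_qRecip (hq : 0 ≤ q) (n : ℕ) :
    ∏ k ∈ range n, (1 + qRecip q k) = ∑ i ∈ range (n + 1), q ^ i := by
  induction n with
  | zero => simp
  | succ n ih =>
    rw [prod_range_succ, ih, qRecip, mul_one_add, mul_div_cancel₀ _ (geom_sum_succ_pos hq n).ne',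
      ← sum_range_succ]

end QRecip

section QNumber

/-- The q-number `[z]_q = (1 - q^z)/(1 - q)` of a complex `z`; at `q = 1` it takes the junk value
`0`, not the limit `z`. -/
noncomputable def qNumber (q z : ℂ) : ℂ :=
  (1 - q ^ z) / (1 - q)

lemma isBigO_qNumber_sub (z : ℂ) :
    (fun q => qNumber q z - z) =O[𝓝[≠] 1] fun q : ℂ => 1 - q := by
  set f : ℂ → ℂ := fun q => q ^ z
  have hslit : Complex.slitPlane ∈ 𝓝 (1 : ℂ) :=
    Complex.isOpen_slitPlane.mem_nhds Complex.one_mem_slitPlane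
  have hf : DifferentiableOn ℂ f Complex.slitPlane := fun q hq =>
    (differentiableAt_id.cpow_const hq).differentiableWithinAt
  have hf_one : f 1 = 1 := Complex.one_cpow z
  have hderiv : deriv f 1 = z := by
    simpa using ((hasDerivAt_id (1 : ℂ)).cpow_const (c := z) Complex.one_mem_slitPlane).deriv
  have hdslope : (fun q => dslope f 1 q - dslope f 1 1) =O[𝓝 1] fun q => q - 1 :=
    (((Complex.differentiableOn_dslope hslit).2 hf).differentiableAt hslit).isBigO_sub
  rw [← isBigO_neg_right]
  refine (hdslope.mono nhdsWithin_le_nhds).congr' ?_ (.of_forall fun q => (neg_sub 1 q).symm)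
  filter_upwards [self_mem_nhdsWithin] with q hq
  rw [dslope_same, hderiv, dslope_of_ne f hq, slope_def_field, qNumber, ← neg_sub 1 q,
    ← neg_sub (f 1), neg_div_neg_eq, hf_one]

lemma tendsto_qNumber (z : ℂ) : Tendsto (fun q => qNumber q z) (𝓝[≠] 1) (𝓝 z) := by
  have h : Tendsto (fun q : ℂ => 1 - q) (𝓝[≠] 1) (𝓝 0) := by
    simpa using (continuous_sub_left (1 : ℂ)).continuousWithinAt.tendsto (x := 1)
  simpa using ((isBigO_qNumber_sub z).trans_tendsto h).add_const z

lemma tendsto_ofReal_nhdsLT_nhdsNE (x : ℝ) :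
    Tendsto (fun q : ℝ => (q : ℂ)) (𝓝[<] x) (𝓝[≠] (x : ℂ)) :=
  tendsto_nhdsWithin_iff.2 ⟨Complex.continuous_ofReal.continuousWithinAt,
    eventually_mem_nhdsWithin.mono fun _ hq => Complex.ofReal_injective.ne (Set.mem_Iio.1 hq).ne⟩

lemma tendsto_one_sub_cpow_sub_qNumber (z : ℂ) :
    Tendsto (fun q : ℝ => ((1 - q : ℝ) : ℂ) ^ (z - qNumber q z)) (𝓝[<] 1) (𝓝 1) := by
  have hO : (fun q : ℝ => z - qNumber q z) =O[𝓝[<] 1] fun q : ℝ => 1 - q := by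
    have h := ((isBigO_qNumber_sub z).comp_tendsto (tendsto_ofReal_nhdsLT_nhdsNE 1)).neg_left
    refine Complex.isBigO_ofReal_right.1 ?_
    simpa only [Function.comp_def, neg_sub, Complex.ofReal_sub, Complex.ofReal_one] using h
  have hlog : Tendsto (fun q : ℝ => Real.log (1 - q) * (1 - q)) (𝓝[<] 1) (𝓝 0) := by
    have h : Continuous fun q : ℝ => (1 - q) * Real.log (1 - q) :=
      Real.continuous_mul_log.comp (continuous_sub_left 1)
    simpa [mul_comm] using h.continuousWithinAt.tendsto (x := 1)
  have hexponent : Tendsto (fun q : ℝ => (Real.log (1 - q) : ℂ) * (z - qNumber q z))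
      (𝓝[<] 1) (𝓝 0) :=
    ((Complex.isBigO_ofReal_left.2 (isBigO_refl _ _)).mul hO).trans_tendsto hlog
  rw [← Complex.exp_zero]
  refine (Complex.continuous_exp.continuousAt.tendsto.comp hexponent).congr' ?_
  filter_upwards [self_mem_nhdsWithin] with q hq
  have hpos : 0 < 1 - q := sub_pos.2 hq
  rw [Function.comp_apply, Complex.ofReal_log hpos.le,
    Complex.cpow_def_of_ne_zero (mod_cast hpos.ne')]

end QNumber

section QGammaProduct

variable {q : ℝ}

lemma norm_ofReal_lt_one (hq₀ : 0 ≤ q) (hq₁ : q < 1) : ‖(q : ℂ)‖ < 1 := by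
  rwa [Complex.norm_of_nonneg hq₀]

lemma one_add_qNumber_mul_qRecip (hq₀ : 0 ≤ q) (hq₁ : q < 1) (z : ℂ) (k : ℕ) :
    1 + qNumber q z * qRecip q k =
      (1 - (q : ℂ) ^ z * q * (q : ℂ) ^ k) / (1 - q * (q : ℂ) ^ k) := by
  have hq : 1 - (q : ℂ) ≠ 0 := mod_cast (sub_pos.2 hq₁).ne'
  have hpow : 1 - (q : ℂ) ^ (k + 1) ≠ 0 :=
    mod_cast (sub_pos.2 (pow_lt_one₀ hq₀ hq₁ k.succ_ne_zero)).ne'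
  have hsum : ∑ i ∈ range (k + 1), (q : ℂ) ^ i = (1 - (q : ℂ) ^ (k + 1)) / (1 - q) :=
    eq_div_of_mul_eq hq (by rw [mul_comm, mul_neg_geom_sum])
  rw [qNumber, qRecip, ← pow_succ', Complex.ofReal_div, Complex.ofReal_sum]
  simp only [Complex.ofReal_pow, hsum]
  field_simp
  ring

lemma qGamma_eq_cpow (hq₀ : 0 < q) (hq₁ : q < 1) (z : ℂ) :
    qGamma q z = qPochInf q q / qPochInf ((q : ℂ) ^ z) q * ((1 - q : ℝ) : ℂ) ^ (1 - z) := by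
  have h : 0 < 1 - q := sub_pos.2 hq₁
  rw [qGamma, Complex.cpow_def_of_ne_zero (mod_cast hq₀.ne'),
    Complex.cpow_def_of_ne_zero (mod_cast h.ne'), ← Complex.ofReal_log hq₀.le,
    ← Complex.ofReal_log h.le, mul_comm z, mul_comm (1 - z)]

lemma tprod_eulerFactor_qRecip (hq₀ : 0 ≤ q) (hq₁ : q < 1) (z : ℂ) :
    ∏' k, eulerFactor (qNumber q z) (qRecip q k) =
      qPochInf ((q : ℂ) ^ z * q) q / qPochInf q q * ((1 - q : ℝ) : ℂ) ^ qNumber q z := by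
  have hq := norm_ofReal_lt_one hq₀ hq₁
  have hsummable : Summable fun k => qRecip q k ^ 2 :=
    summable_one_div_nat_add_one_sq.of_nonneg_of_le (fun k => sq_nonneg _) fun k =>
      pow_le_pow_left₀ (qRecip_nonneg hq₀ k) (qRecip_le_one_div hq₀ hq₁.le k) 2
  have hprod := (multipliable_eulerFactor (qNumber q z) (qRecip_nonneg hq₀)
    (fun k => (qRecip_le_one_div hq₀ hq₁.le k).trans (one_div_nat_add_one_le_one k))
    hsummable).tendsto_prod_tprod_nat
  have hgeom : Tendsto (fun n => ∑ i ∈ range (n + 1), q ^ i) atTop (𝓝 (1 - q)⁻¹) :=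
    (tendsto_add_atTop_iff_nat 1).2 (hasSum_geometric_of_lt_one hq₀ hq₁).tendsto_sum_nat
  have hpow : Tendsto (fun n => ((∑ i ∈ range (n + 1), q ^ i : ℝ) : ℂ) ^ (-qNumber q z)) atTop
      (𝓝 (((1 - q : ℝ) : ℂ) ^ qNumber q z)) := by
    have h : 0 < 1 - q := sub_pos.2 hq₁
    have hcpow := (Complex.continuousAt_ofReal_cpow_const (1 - q)⁻¹ (-qNumber q z)
      (.inr (inv_ne_zero h.ne'))).tendsto.comp hgeom
    rwa [Complex.ofReal_inv, Complex.inv_cpow_ofReal_nonneg h.le, Complex.cpow_neg,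
      inv_inv] at hcpow
  have hquot := ((multipliable_one_sub_mul_pow ((q : ℂ) ^ z * q) hq).tendsto_prod_tprod_nat.div
    (multipliable_one_sub_mul_pow q hq).tendsto_prod_tprod_nat (qPochInf_self_ne_zero hq)).mul hpow
  refine tendsto_nhds_unique hprod (hquot.congr fun n => ?_)
  simp only [prod_range_eulerFactor _ (qRecip_nonneg hq₀), prod_range_one_add_qRecip hq₀,
    one_add_qNumber_mul_qRecip hq₀ hq₁, prod_div_distrib, Pi.div_apply]

theorem inv_qGamma_eq_tprod (hq₀ : 0 < q) (hq₁ : q < 1) (z : ℂ) :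
    (qGamma q z)⁻¹ = ((1 - q : ℝ) : ℂ) ^ (z - qNumber q z) *
      (qNumber q z * ∏' k, eulerFactor (qNumber q z) (qRecip q k)) := by
  have h : ((1 - q : ℝ) : ℂ) ≠ 0 := mod_cast (sub_pos.2 hq₁).ne'
  have hpow : ((1 - q : ℝ) : ℂ) ^ qNumber q z ≠ 0 := fun h' =>
    h ((Complex.cpow_eq_zero_iff _ _).1 h').1
  have hmul : 1 - (q : ℂ) ^ z = qNumber q z * ((1 - q : ℝ) : ℂ) := by
    rw [qNumber, ← Complex.ofReal_one, ← Complex.ofReal_sub, div_mul_cancel₀ _ h]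
  rw [qGamma_eq_cpow hq₀ hq₁, tprod_eulerFactor_qRecip hq₀.le hq₁,
    qPochInf_eq_one_sub_mul ((q : ℂ) ^ z) (norm_ofReal_lt_one hq₀.le hq₁), mul_inv, inv_div,
    ← Complex.cpow_neg, neg_sub, Complex.cpow_sub _ _ h, Complex.cpow_sub _ _ h, Complex.cpow_one,
    hmul]
  field_simp

end QGammaProduct

/-- Limit of the q-gamma function: for `z` not a nonpositive integer,
`Γ_q(z) → Γ(z)` as real `q → 1⁻` (through `(0,1)`). -/
theorem qGamma_tendsto_Gamma (z : ℂ) (hz : ∀ n : ℕ, z ≠ -(n : ℂ)) :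
    Filter.Tendsto (fun q : ℝ => qGamma q z) (nhdsWithin 1 (Set.Ioo 0 1))
      (nhds (Complex.Gamma z)) := by
  rw [nhdsWithin_Ioo_eq_nhdsLT zero_lt_one]
  have hunit : ∀ᶠ q : ℝ in 𝓝[<] 1, q ∈ Set.Ioo 0 1 := Ioo_mem_nhdsLT zero_lt_one
  have hnumber : Tendsto (fun q : ℝ => qNumber q z) (𝓝[<] 1) (𝓝 z) :=
    (tendsto_qNumber z).comp (tendsto_ofReal_nhdsLT_nhdsNE 1)
  have hproduct := tendsto_tprod_eulerFactor hnumber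
    (fun k => (tendsto_qRecip_one k).mono_left nhdsWithin_le_nhds)
    (hunit.mono fun q hq k => ⟨qRecip_nonneg hq.1.le k, qRecip_le_one_div hq.1.le hq.2.le k⟩)
    one_div_nat_add_one_le_one summable_one_div_nat_add_one_sq
  have hinv : Tendsto (fun q => (qGamma q z)⁻¹) (𝓝[<] 1) (𝓝 (Complex.Gamma z)⁻¹) := by
    rw [← mul_tprod_eulerFactor_one_div hz, ← one_mul (z * _)]
    refine ((tendsto_one_sub_cpow_sub_qNumber z).mul (hnumber.mul hproduct)).congr' ?_
    exact hunit.mono fun q hq => (inv_qGamma_eq_tprod hq.1 hq.2 z).symm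
  simpa using hinv.inv₀ (inv_ne_zero (Complex.Gamma_ne_zero hz))
end
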